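/- Operadic Stokes law for Gerstenhaber brackets: for every bilinear map μ ∈ C² and all multilinear maps h ∈ C^m, f ∈ C^n, g ∈ C^p, δ_μ⟨h|fg⟩ − ⟨h|f(δ_μ g)⟩ − (−1)^{|g|}⟨h|(δ_μ f)g⟩ − (−1)^{|g|+|f|}⟨(δ_μ h)|fg⟩ = (−1)^{|g|} ([h,f] ⌣ g + (−1)^{|h| n} f ⌣ [h,g] − [h, f ⌣ g]), where |h| = m − 1, |f| = n − 1, |g| = p − 1. -/

import Mathlib

open Finset

section OperadPrelude

variable {K : Type*} [CommRing K] {L : Type*} [AddCommGroup L] [Module K L]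

/-- `C K L n`: the `K`-module of `n`-multilinear maps `L^n → L`
(the degree-`n` component of the endomorphism operad of `L`). -/
abbrev C (K L : Type*) [CommRing K] [AddCommGroup L] [Module K L] (n : ℕ) :=
  MultilinearMap K (fun _ : Fin n => L) L

/-- The extension of an `n`-ary multilinear operation to sequences `ℕ → L`:
it evaluates `f` on the first `n` entries of the sequence.  Two `n`-ary
multilinear operations are equal iff their extensions are equal, so operadic
identities are stated as identities between extensions. -/
def ex {n : ℕ} (f : C K L n) : (ℕ → L) → L := fun x => f fun j => x j.1

/-- The sign `(-1)^e` for an integer exponent `e`. -/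
def sgn (e : ℤ) : ℤ := (((-1 : ℤˣ) ^ e : ℤˣ) : ℤ)

/-- Partial composition `f ∘ᵢ g`, where `n = deg g`:
`(f ∘ᵢ g)(x₀, x₁, …) = (-1)^{i(n-1)} f(x₀,…,x_{i-1}, g(x_i,…,x_{i+n-1}), x_{i+n},…)`. -/
def pc (n i : ℕ) (f g : (ℕ → L) → L) : (ℕ → L) → L :=
  fun x => sgn ((i : ℤ) * ((n : ℤ) - 1)) •
    f fun j => if j < i then x j else if j = i then g (fun k => x (i + k)) else x (j + n - 1)

/-- Total composition `f ∘ g := Σ_{i=0}^{m-1} f ∘ᵢ g`, where `m = deg f`, `n = deg g`. -/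
def tc (m n : ℕ) (f g : (ℕ → L) → L) : (ℕ → L) → L :=
  fun x => ∑ i ∈ Finset.range m, pc n i f g x

/-- The associator `(h, f, g) := (h ∘ f) ∘ g − h ∘ (f ∘ g)` of the total composition,
where `m = deg h`, `n = deg f`, `p = deg g`. -/
def assoc (m n p : ℕ) (h f g : (ℕ → L) → L) : (ℕ → L) → L :=
  fun x => tc (m + n - 1) p (tc m n h f) g x - tc m (n + p - 1) h (tc n p f g) x

/-- The brace `⟨h|fg⟩ := Σ (h ∘ᵢ f) ∘ⱼ g`, summed over `0 ≤ i ≤ m-2`,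
`i + n ≤ j ≤ m + n - 2`, where `m = deg h`, `n = deg f`, `p = deg g`. -/
def br2 (m n p : ℕ) (h f g : (ℕ → L) → L) : (ℕ → L) → L :=
  fun x => ∑ i ∈ Finset.range (m - 1), ∑ j ∈ Finset.Icc (i + n) (m + n - 2),
    pc p j (pc n i h f) g x

/-- The triple brace `⟨h|fgb⟩ := Σ ((h ∘ᵢ f) ∘ⱼ g) ∘ₖ b`, summed over `0 ≤ i ≤ m-3`,
`i + n ≤ j ≤ m + n - 3`, `j + p ≤ k ≤ m + n + p - 3`, where
`m = deg h`, `n = deg f`, `p = deg g`, `q = deg b`. -/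
def br3 (m n p q : ℕ) (h f g b : (ℕ → L) → L) : (ℕ → L) → L :=
  fun x => ∑ i ∈ Finset.range (m - 2), ∑ j ∈ Finset.Icc (i + n) (m + n - 3),
    ∑ k ∈ Finset.Icc (j + p) (m + n + p - 3),
      pc q k (pc p j (pc n i h f) g) b x

/-- The Gerstenhaber bracket `[f,g] := f ∘ g − (-1)^{|f||g|} g ∘ f`,
where `m = deg f`, `n = deg g`, `|f| = m - 1`, `|g| = n - 1`. -/
def gb (m n : ℕ) (f g : (ℕ → L) → L) : (ℕ → L) → L :=
  fun x => tc m n f g x - sgn (((m : ℤ) - 1) * ((n : ℤ) - 1)) • tc n m g f x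

/-- The cup product `f ⌣ g := (-1)^{deg f} (μ ∘₀ f) ∘_{deg f} g`,
where `m = deg f`, `n = deg g`. -/
def cup (μ : C K L 2) (m n : ℕ) (f g : (ℕ → L) → L) : (ℕ → L) → L :=
  fun x => sgn (m : ℤ) • pc n m (pc m 0 (ex μ) f) g x

/-- The coboundary operator `δ_μ f := −[f, μ]`, where `m = deg f`. -/
def delta (μ : C K L 2) (m : ℕ) (f : (ℕ → L) → L) : (ℕ → L) → L :=
  fun x => - gb m 2 f (ex μ) x

/-!
Every brace is a sum of partial compositions of truncated total compositions: in `⟨h|fg⟩`, for each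
slot `j` of `h`, the operation `g` goes to the slot `j` and `f` runs through the slots before it.
Adding the slots of `h` one at a time, the two axioms of partial composition (disjoint and nested
insertion) give by induction the brace relations for `⟨h|fg⟩ ∘ b` and `⟨h ∘ b|fg⟩`. The Stokes law
is a combination of four of their instances: `b = μ` in both relations expands the left-hand side,
whose triple braces cancel, while `⟨μ|fg⟩ ∘ h` and `⟨μ ∘ h|fg⟩` have no triple braces and account
for the cup products, since `f ⌣ g = (-1)^{deg f} ⟨μ|fg⟩`.
-/

lemma sgn_eq_ite (e : ℤ) : sgn e = if Even e then 1 else -1 := by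
  unfold sgn
  split_ifs with h
  · simp [h.neg_one_zpow]
  · simp [(Int.not_even_iff_odd.mp h).neg_one_zpow]

lemma sgn_add (a b : ℤ) : sgn (a + b) = sgn a * sgn b := by
  simp [sgn, zpow_add]

lemma sgn_congr {a b : ℤ} (h : Even a ↔ Even b) : sgn a = sgn b := by
  simp only [sgn_eq_ite, h]

/-- `H` is additive in the entry `i` of its argument: for an operation of degree `m` and `i < m`
this is additivity in the variable number `i`. -/
def AdditiveInSlot (i : ℕ) (H : (ℕ → L) → L) : Prop :=
  ∀ (x : ℕ → L) (a b : L),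
    H (Function.update x i (a + b)) = H (Function.update x i a) + H (Function.update x i b)

lemma additiveInSlot_ex {n i : ℕ} (f : C K L n) (hi : i < n) : AdditiveInSlot i (ex f) := by
  intro x a b
  have ex_update (v : L) : ex f (Function.update x i v)
      = f (Function.update (fun j : Fin n => x j) ⟨i, hi⟩ v) :=
    congrArg f (Function.update_comp_eq_of_injective x Fin.val_injective ⟨i, hi⟩ v)
  simp only [ex_update, f.map_update_add]

lemma dependsOn_ex {n : ℕ} (f : C K L n) : DependsOn (ex f) (Set.Iio n) :=
  fun _ _ hxy => congrArg f (funext fun j => hxy j j.isLt)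

section PartialComposition

variable {m n p i j k l : ℕ} {H F G : (ℕ → L) → L}

/-- The sequence `x` with the block `x i, …, x (i + n - 1)` collapsed to one entry, at place `i`;
the value at that place is a placeholder, to be overwritten by the value on the block of an
operation of degree `n`. -/
def collapseBlock (n i : ℕ) (x : ℕ → L) : ℕ → L :=
  fun j => if j < i then x j else x (j + n - 1)

lemma pc_apply_eq_update (n i : ℕ) (H F : (ℕ → L) → L) (x : ℕ → L) :
    pc n i H F x = sgn ((i : ℤ) * ((n : ℤ) - 1)) •
      H (Function.update (collapseBlock n i x) i (F fun k => x (i + k))) := by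
  unfold pc
  congr 2
  funext j
  rcases eq_or_ne j i with rfl | h <;> simp [collapseBlock, *]

lemma pc_add_left (n i : ℕ) (H H' F : (ℕ → L) → L) :
    pc n i (H + H') F = pc n i H F + pc n i H' F := by
  funext x
  simp [pc]

lemma pc_zero_left (n i : ℕ) (F : (ℕ → L) → L) : pc n i 0 F = 0 := by
  funext x
  simp [pc]

lemma pc_sub_left (n i : ℕ) (H H' F : (ℕ → L) → L) :
    pc n i (H - H') F = pc n i H F - pc n i H' F := by
  funext x
  simp [pc, smul_sub]

lemma pc_zsmul_left (n i : ℕ) (c : ℤ) (H F : (ℕ → L) → L) :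
    pc n i (c • H) F = c • pc n i H F := by
  funext x
  exact smul_comm (sgn _) c _

lemma pc_sum_left {ι : Type*} (n i : ℕ) (s : Finset ι) (H : ι → (ℕ → L) → L) (F : (ℕ → L) → L) :
    pc n i (∑ a ∈ s, H a) F = ∑ a ∈ s, pc n i (H a) F := by
  funext x
  simp [pc, Finset.smul_sum]

lemma pc_add_right (hH : AdditiveInSlot i H) (F F' : (ℕ → L) → L) :
    pc n i H (F + F') = pc n i H F + pc n i H F' := by
  funext x
  simp only [Pi.add_apply, pc_apply_eq_update, hH _ _ _, smul_add]

lemma pc_zero_right (hH : AdditiveInSlot i H) : pc n i H 0 = 0 :=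
  map_zero (AddMonoidHom.mk' (pc n i H) (pc_add_right hH))

lemma pc_sub_right (hH : AdditiveInSlot i H) (F F' : (ℕ → L) → L) :
    pc n i H (F - F') = pc n i H F - pc n i H F' :=
  map_sub (AddMonoidHom.mk' (pc n i H) (pc_add_right hH)) F F'

lemma pc_zsmul_right (hH : AdditiveInSlot i H) (c : ℤ) (F : (ℕ → L) → L) :
    pc n i H (c • F) = c • pc n i H F :=
  map_zsmul (AddMonoidHom.mk' (pc n i H) (pc_add_right hH)) c F

lemma AdditiveInSlot.add {H' : (ℕ → L) → L} (hH : AdditiveInSlot i H) (hH' : AdditiveInSlot i H') :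
    AdditiveInSlot i (H + H') := by
  intro x a b
  simp only [Pi.add_apply, hH x a b, hH' x a b]
  exact add_add_add_comm ..

lemma additiveInSlot_zero (i : ℕ) : AdditiveInSlot i (0 : (ℕ → L) → L) := by
  simp [AdditiveInSlot]

lemma additiveInSlot_pc (hH : AdditiveInSlot (j + 1) H) (hF : DependsOn F (Set.Iio n))
    (hij : i ≤ j) : AdditiveInSlot (j + n) (pc n i H F) := by
  intro x a b
  have pc_update (v : L) : pc n i H F (Function.update x (j + n) v) =
      sgn ((i : ℤ) * ((n : ℤ) - 1)) • H (Function.update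
        (Function.update (collapseBlock n i x) i (F fun k => x (i + k))) (j + 1) v) := by
    have block : F (fun k => Function.update x (j + n) v (i + k)) = F fun k => x (i + k) :=
      hF fun k hk => Function.update_of_ne (by grind) _ _
    rw [pc_apply_eq_update, block]
    congr 2
    funext a
    grind [Function.update_apply, collapseBlock]
  simp only [pc_update, hH _ _ _, smul_add]

lemma pc_pc_of_lt (F : (ℕ → L) → L) (hG : DependsOn G (Set.Iio p)) (hji : j < i) :
    pc p j (pc n i H F) G
      = sgn (((n : ℤ) - 1) * ((p : ℤ) - 1)) • pc n (i + p - 1) (pc p j H G) F := by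
  funext x
  have block : G (fun k => if j + k < i + p - 1 then x (j + k) else if j + k = i + p - 1 then
      F fun k => x (i + p - 1 + k) else x (j + k + n - 1)) = G fun k => x (j + k) :=
    hG fun k hk => if_pos (by grind)
  simp only [Pi.smul_apply, pc, smul_smul, ← sgn_add, block]
  congr 1
  · refine sgn_congr ?_
    rw [show ((i + p - 1 : ℕ) : ℤ) = i + p - 1 by omega]
    grind
  · congr 1
    funext a
    grind

lemma pc_pc_nest (F G : (ℕ → L) → L) (hH : AdditiveInSlot i H) (hl : l < n) (hk : k = i + l) :
    pc p k (pc n i H F) G = pc (n + p - 1) i H (pc p l F G) := by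
  subst hk
  rw [show pc p l F G = sgn ((l : ℤ) * ((p : ℤ) - 1)) • fun x => F fun j =>
      if j < l then x j else if j = l then G fun k => x (l + k) else x (j + p - 1) from rfl,
    pc_zsmul_right hH]
  funext x
  simp only [Pi.smul_apply, pc, smul_smul, ← sgn_add]
  congr 1
  · refine congrArg sgn ?_
    rw [show ((n + p - 1 : ℕ) : ℤ) = n + p - 1 by omega]
    grind
  · congr 1
    funext a
    rcases lt_trichotomy a i with h | rfl | h
    · grind
    · simp only [lt_irrefl, if_false, if_true]
      congr 1
      funext k
      grind
    · grind

end PartialComposition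

section TotalComposition

variable {m n p q i k l : ℕ} {H F B : (ℕ → L) → L}

lemma tc_eq_sum (m n : ℕ) (H F : (ℕ → L) → L) : tc m n H F = ∑ i ∈ range m, pc n i H F := by
  funext x
  simp [tc]

lemma tc_zero (n : ℕ) (H F : (ℕ → L) → L) : tc 0 n H F = 0 := by
  simp [tc_eq_sum]

lemma tc_succ (m n : ℕ) (H F : (ℕ → L) → L) :
    tc (m + 1) n H F = tc m n H F + pc n m H F := by
  simp only [tc_eq_sum, sum_range_succ]

lemma tc_add_left (m n : ℕ) (H H' F : (ℕ → L) → L) :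
    tc m n (H + H') F = tc m n H F + tc m n H' F := by
  simp only [tc_eq_sum, pc_add_left, sum_add_distrib]

lemma tc_sub_left (m n : ℕ) (H H' F : (ℕ → L) → L) :
    tc m n (H - H') F = tc m n H F - tc m n H' F := by
  simp only [tc_eq_sum, pc_sub_left, sum_sub_distrib]

lemma tc_zsmul_left (m n : ℕ) (c : ℤ) (H F : (ℕ → L) → L) :
    tc m n (c • H) F = c • tc m n H F := by
  simp only [tc_eq_sum, pc_zsmul_left, smul_sum]

lemma tc_zero_left (m n : ℕ) (F : (ℕ → L) → L) : tc m n 0 F = 0 := by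
  simp only [tc_eq_sum, pc_zero_left, sum_const_zero]

lemma tc_sub_right (hH : ∀ i < m, AdditiveInSlot i H) (F F' : (ℕ → L) → L) :
    tc m n H (F - F') = tc m n H F - tc m n H F' := by
  simp only [tc_eq_sum, ← sum_sub_distrib]
  exact sum_congr rfl fun i hi => pc_sub_right (hH i (mem_range.mp hi)) F F'

lemma tc_zsmul_right (hH : ∀ i < m, AdditiveInSlot i H) (c : ℤ) (F : (ℕ → L) → L) :
    tc m n H (c • F) = c • tc m n H F := by
  simp only [tc_eq_sum, smul_sum]
  exact sum_congr rfl fun i hi => pc_zsmul_right (hH i (mem_range.mp hi)) c F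

lemma tc_zero_right (hH : ∀ i < m, AdditiveInSlot i H) : tc m n H 0 = 0 := by
  rw [tc_eq_sum]
  exact sum_eq_zero fun i hi => pc_zero_right (hH i (mem_range.mp hi))

lemma additiveInSlot_tc (hH : AdditiveInSlot m H) (hF : DependsOn F (Set.Iio n)) :
    AdditiveInSlot (m + n - 1) (tc m n H F) := by
  rw [tc_eq_sum]
  refine sum_induction _ (AdditiveInSlot (m + n - 1)) (fun _ _ => AdditiveInSlot.add)
    (additiveInSlot_zero _) fun i hi => ?_
  obtain ⟨j, rfl⟩ : ∃ j, m = j + 1 := ⟨m - 1, by grind⟩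
  rw [Nat.add_right_comm, Nat.add_sub_cancel]
  exact additiveInSlot_pc hH hF (by grind)

lemma tc_pc_of_le (F : (ℕ → L) → L) (hB : DependsOn B (Set.Iio q)) (hki : k ≤ i) :
    tc k q (pc n i H F) B
      = sgn (((n : ℤ) - 1) * ((q : ℤ) - 1)) • pc n (i + q - 1) (tc k q H B) F := by
  simp only [tc_eq_sum, pc_sum_left, smul_sum]
  exact sum_congr rfl fun j hj => pc_pc_of_lt F hB (by grind)

lemma tc_add_pc (F : (ℕ → L) → L) (hH : AdditiveInSlot m H) (hB : DependsOn B (Set.Iio q))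
    (hl : l ≤ n) :
    tc (m + l) q (pc n m H F) B
      = sgn (((n : ℤ) - 1) * ((q : ℤ) - 1)) • pc n (m + q - 1) (tc m q H B) F
        + pc (n + q - 1) m H (tc l q F B) := by
  induction l with
  | zero => rw [add_zero, tc_pc_of_le F hB le_rfl, tc_zero, pc_zero_right hH, add_zero]
  | succ l ih =>
    rw [← add_assoc, tc_succ, ih (by omega), tc_succ, pc_add_right hH,
      pc_pc_nest F B hH (by omega) rfl, add_assoc]

end TotalComposition

section Brace

variable {m n p q k l : ℕ} {H F G B : (ℕ → L) → L}

lemma br2_eq_sum_sum (m n p : ℕ) (H F G : (ℕ → L) → L) :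
    br2 m n p H F G = ∑ i ∈ range (m - 1), ∑ j ∈ Icc (i + n) (m + n - 2),
      pc p j (pc n i H F) G := by
  funext x
  simp [br2]

lemma br2_eq_sum (m n p : ℕ) (H F G : (ℕ → L) → L) :
    br2 m n p H F G = ∑ j ∈ range m, pc p (j + n - 1) (tc j n H F) G := by
  simp only [br2_eq_sum_sum, tc_eq_sum, pc_sum_left, sum_sigma']
  refine sum_nbij' (fun x => ⟨x.2 + 1 - n, x.1⟩) (fun x => ⟨x.2, x.1 + n - 1⟩) ?_ ?_ ?_ ?_ ?_ <;>
    grind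

lemma br3_eq_sum (m n p q : ℕ) (H F G B : (ℕ → L) → L) :
    br3 m n p q H F G B = ∑ k ∈ range m, pc q (k + n + p - 2) (br2 k n p H F G) B := by
  have br3_eq_sum_sum_sum : br3 m n p q H F G B = ∑ i ∈ range (m - 2),
      ∑ j ∈ Icc (i + n) (m + n - 3), ∑ k ∈ Icc (j + p) (m + n + p - 3),
        pc q k (pc p j (pc n i H F) G) B := by
    funext x
    simp [br3]
  simp only [br2_eq_sum_sum, br3_eq_sum_sum_sum, pc_sum_left, sum_sigma']
  refine sum_nbij' (fun x => ⟨x.2.2 + 2 - n - p, x.1, x.2.1⟩)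
    (fun x => ⟨x.2.1, x.2.2, x.1 + n + p - 2⟩) ?_ ?_ ?_ ?_ ?_ <;>
    grind

lemma br2_succ (m n p : ℕ) (H F G : (ℕ → L) → L) :
    br2 (m + 1) n p H F G = br2 m n p H F G + pc p (m + n - 1) (tc m n H F) G := by
  simp only [br2_eq_sum, sum_range_succ]

lemma br3_succ (m n p q : ℕ) (H F G B : (ℕ → L) → L) :
    br3 (m + 1) n p q H F G B
      = br3 m n p q H F G B + pc q (m + n + p - 2) (br2 m n p H F G) B := by
  simp only [br3_eq_sum, sum_range_succ]

lemma br2_of_lt_two (n p : ℕ) (H F G : (ℕ → L) → L) (hm : m < 2) : br2 m n p H F G = 0 := by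
  rw [br2_eq_sum_sum, show m - 1 = 0 by omega, sum_range_zero]

lemma br3_of_lt_three (n p q : ℕ) (H F G B : (ℕ → L) → L) (hm : m < 3) :
    br3 m n p q H F G B = 0 := by
  rw [br3_eq_sum]
  exact sum_eq_zero fun k hk => by
    rw [br2_of_lt_two n p H F G (by grind), pc_zero_left]

lemma br2_zero (n p : ℕ) (H F G : (ℕ → L) → L) : br2 0 n p H F G = 0 :=
  br2_of_lt_two n p H F G two_pos

lemma br3_zero (n p q : ℕ) (H F G B : (ℕ → L) → L) : br3 0 n p q H F G B = 0 :=
  br3_of_lt_three n p q H F G B three_pos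

lemma br2_two (n p : ℕ) (H F G : (ℕ → L) → L) :
    br2 2 n p H F G = pc p n (pc n 0 H F) G := by
  simp [br2_succ, br2_zero, tc_succ, tc_zero, pc_zero_left]

lemma br2_add_left (m n p : ℕ) (H H' F G : (ℕ → L) → L) :
    br2 m n p (H + H') F G = br2 m n p H F G + br2 m n p H' F G := by
  simp only [br2_eq_sum, tc_add_left, pc_add_left, sum_add_distrib]

lemma br2_zero_left (m n p : ℕ) (F G : (ℕ → L) → L) : br2 m n p 0 F G = 0 := by
  simp only [br2_eq_sum, tc_zero_left, pc_zero_left, sum_const_zero]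

lemma br2_sub_left (m n p : ℕ) (H H' F G : (ℕ → L) → L) :
    br2 m n p (H - H') F G = br2 m n p H F G - br2 m n p H' F G := by
  simp only [br2_eq_sum, tc_sub_left, pc_sub_left, sum_sub_distrib]

lemma br2_zsmul_left (m n p : ℕ) (c : ℤ) (H F G : (ℕ → L) → L) :
    br2 m n p (c • H) F G = c • br2 m n p H F G := by
  simp only [br2_eq_sum, tc_zsmul_left, pc_zsmul_left, smul_sum]

lemma br2_sub_middle (hH : ∀ i < m, AdditiveInSlot i H) (F F' G : (ℕ → L) → L) :
    br2 m n p H (F - F') G = br2 m n p H F G - br2 m n p H F' G := by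
  simp only [br2_eq_sum, ← sum_sub_distrib, ← pc_sub_left]
  exact sum_congr rfl fun j hj => by rw [tc_sub_right fun i hi => hH i (by grind)]

lemma br2_zsmul_middle (hH : ∀ i < m, AdditiveInSlot i H) (c : ℤ) (F G : (ℕ → L) → L) :
    br2 m n p H (c • F) G = c • br2 m n p H F G := by
  simp only [br2_eq_sum, smul_sum, ← pc_zsmul_left]
  exact sum_congr rfl fun j hj => by rw [tc_zsmul_right fun i hi => hH i (by grind)]

lemma br2_sub_right (hH : ∀ i < m, AdditiveInSlot i H) (hF : DependsOn F (Set.Iio n))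
    (G G' : (ℕ → L) → L) :
    br2 m n p H F (G - G') = br2 m n p H F G - br2 m n p H F G' := by
  simp only [br2_eq_sum, ← sum_sub_distrib]
  exact sum_congr rfl fun j hj =>
    pc_sub_right (additiveInSlot_tc (hH j (mem_range.mp hj)) hF) G G'

lemma br2_zsmul_right (hH : ∀ i < m, AdditiveInSlot i H) (hF : DependsOn F (Set.Iio n))
    (c : ℤ) (G : (ℕ → L) → L) :
    br2 m n p H F (c • G) = c • br2 m n p H F G := by
  simp only [br2_eq_sum, smul_sum]
  exact sum_congr rfl fun j hj =>
    pc_zsmul_right (additiveInSlot_tc (hH j (mem_range.mp hj)) hF) c G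

lemma tc_tc (hH : ∀ i < m, AdditiveInSlot i H) (F : (ℕ → L) → L) (hB : DependsOn B (Set.Iio q)) :
    tc (m + n - 1) q (tc m n H F) B
      = tc m (n + q - 1) H (tc n q F B) + br2 m n q H F B
        + sgn (((n : ℤ) - 1) * ((q : ℤ) - 1)) • br2 m q n H B F := by
  induction m with
  | zero => simp [tc_zero, tc_zero_left, br2_zero]
  | succ m ih =>
    have tc_last : tc (m + n) q (tc m n H F) B
        = tc (m + n - 1) q (tc m n H F) B + pc q (m + n - 1) (tc m n H F) B := by
      -- For `m = n = 0` the subtraction `m + n - 1` is truncated, but then `tc m n H F = 0`.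
      rcases Nat.eq_zero_or_pos m with rfl | hm
      · simp [tc_zero, tc_zero_left, pc_zero_left]
      · rw [← tc_succ, Nat.sub_add_cancel (by omega)]
    rw [show m + 1 + n - 1 = m + n by omega, tc_succ m n, tc_add_left, tc_last,
      ih fun i hi => hH i (by omega), tc_add_pc F (hH m (by omega)) hB le_rfl,
      tc_succ, br2_succ, br2_succ, smul_add]
    abel

lemma tc_br2 (hH : ∀ i < m, AdditiveInSlot i H) (hF : DependsOn F (Set.Iio n)) (G : (ℕ → L) → L)
    (hB : DependsOn B (Set.Iio q)) :
    tc (m + n + p - 2) q (br2 m n p H F G) B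
      = br2 m n (p + q - 1) H F (tc p q G B) + br3 m n p q H F G B
        + sgn (((p : ℤ) - 1) * ((q : ℤ) - 1)) •
          (br2 m (n + q - 1) p H (tc n q F B) G + br3 m n q p H F B G
            + sgn (((n : ℤ) - 1) * ((q : ℤ) - 1)) • br3 m q n p H B F G) := by
  induction m with
  | zero => simp [tc_zero_left, br2_zero, br3_zero]
  | succ m ih =>
    have tc_last : tc (m + 1 + n + p - 2) q (br2 m n p H F G) B
        = tc (m + n + p - 2) q (br2 m n p H F G) B
          + pc q (m + n + p - 2) (br2 m n p H F G) B := by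
      rcases lt_or_ge m 2 with hm | hm
      · simp [br2_of_lt_two n p H F G hm, tc_zero_left, pc_zero_left]
      · rw [← tc_succ, show m + n + p - 2 + 1 = m + 1 + n + p - 2 by omega]
    have tc_step : tc (m + 1 + n + p - 2) q (pc p (m + n - 1) (tc m n H F) G) B
        = sgn (((p : ℤ) - 1) * ((q : ℤ) - 1)) •
            pc p (m + n + q - 2) (tc (m + n - 1) q (tc m n H F) B) G
          + pc (p + q - 1) (m + n - 1) (tc m n H F) (tc p q G B) := by
      rcases Nat.eq_zero_or_pos m with rfl | hm
      · simp [tc_zero, tc_zero_left, pc_zero_left]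
      · rw [show m + 1 + n + p - 2 = m + n - 1 + p by omega,
          tc_add_pc G (additiveInSlot_tc (hH m (by omega)) hF) hB le_rfl,
          show m + n - 1 + q - 1 = m + n + q - 2 by omega]
    have shift : pc p (m + n + q - 2) (tc m (n + q - 1) H (tc n q F B)) G
        = pc p (m + (n + q - 1) - 1) (tc m (n + q - 1) H (tc n q F B)) G := by
      rcases Nat.eq_zero_or_pos n with rfl | hn
      · simp [tc_zero, tc_zero_right fun i hi => hH i (Nat.lt_succ_of_lt hi), pc_zero_left]
      · rw [show m + n + q - 2 = m + (n + q - 1) - 1 by omega]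
    rw [br2_succ, tc_add_left, tc_last, ih fun i hi => hH i (by omega), tc_step,
      tc_tc (fun i hi => hH i (by omega)) F hB]
    simp only [br2_succ, br3_succ, pc_add_left, pc_zsmul_left, smul_add, smul_smul, shift,
      add_right_comm m q n]
    abel

lemma br2_pc_of_le (hF : DependsOn F (Set.Iio n)) (hG : DependsOn G (Set.Iio p)) (hk : k ≤ m) :
    br2 k n p (pc q m H B) F G
      = (sgn (((q : ℤ) - 1) * ((n : ℤ) - 1)) * sgn (((q : ℤ) - 1) * ((p : ℤ) - 1))) •
        pc q (m + n + p - 2) (br2 k n p H F G) B := by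
  simp only [br2_eq_sum, pc_sum_left, smul_sum]
  refine sum_congr rfl fun j hj => ?_
  rcases Nat.eq_zero_or_pos j with rfl | hj0
  · simp [tc_zero, pc_zero_left]
  · have hjm : j < m := (mem_range.mp hj).trans_le hk
    rw [tc_pc_of_le B hF hjm.le, pc_zsmul_left, pc_pc_of_lt B hG (by omega), smul_smul,
      show m + n - 1 + p - 1 = m + n + p - 2 by omega]

lemma br2_add_pc (hH : AdditiveInSlot m H) (B : (ℕ → L) → L) (hF : DependsOn F (Set.Iio n))
    (hG : DependsOn G (Set.Iio p)) (hl : l ≤ q) :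
    br2 (m + l) n p (pc q m H B) F G
      = (sgn (((q : ℤ) - 1) * ((n : ℤ) - 1)) * sgn (((q : ℤ) - 1) * ((p : ℤ) - 1))) •
          pc q (m + n + p - 2) (br2 m n p H F G) B
        + sgn (((q : ℤ) - 1) * ((n : ℤ) - 1)) •
          pc (q + p - 1) (m + n - 1) (tc m n H F) (tc l p B G)
        + pc (q + n + p - 2) m H (br2 l n p B F G) := by
  have hHF : AdditiveInSlot (m + n - 1) (tc m n H F) := additiveInSlot_tc hH hF
  induction l with
  | zero =>
    simp [br2_pc_of_le hF hG le_rfl, tc_zero, br2_zero, pc_zero_right hH, pc_zero_right hHF]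
  | succ l ih =>
    have nest_outer : pc p (m + l + n - 1) (pc q (m + n - 1) (tc m n H F) B) G
        = pc (q + p - 1) (m + n - 1) (tc m n H F) (pc p l B G) := by
      rcases Nat.eq_zero_or_pos m with rfl | hm
      · simp [tc_zero, pc_zero_left]
      · exact pc_pc_nest B G hHF hl (by omega)
    have nest_inner : pc p (m + l + n - 1) (pc (q + n - 1) m H (tc l n B F)) G
        = pc (q + n + p - 2) m H (pc p (l + n - 1) (tc l n B F) G) := by
      rcases Nat.eq_zero_or_pos l with rfl | hl0
      · simp [tc_zero, pc_zero_left, pc_zero_right hH]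
      · rw [pc_pc_nest _ G hH (by omega) (by omega : m + l + n - 1 = m + (l + n - 1)),
          show q + n - 1 + p - 1 = q + n + p - 2 by omega]
    rw [← add_assoc, br2_succ, ih (by omega), tc_add_pc B hH hF (by omega), pc_add_left,
      pc_zsmul_left, nest_outer, nest_inner, tc_succ, br2_succ, pc_add_right hH, pc_add_right hHF,
      smul_add]
    abel

lemma br2_tc (hH : ∀ i < m, AdditiveInSlot i H) (B : (ℕ → L) → L) (hF : DependsOn F (Set.Iio n))
    (hG : DependsOn G (Set.Iio p)) :
    br2 (m + q - 1) n p (tc m q H B) F G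
      = tc m (q + n + p - 2) H (br2 q n p B F G) + br2 m (q + n - 1) p H (tc q n B F) G
        + br3 m q n p H B F G
        + sgn (((q : ℤ) - 1) * ((n : ℤ) - 1)) •
          (br2 m n (q + p - 1) H F (tc q p B G) + br3 m n q p H F B G
            + sgn (((q : ℤ) - 1) * ((p : ℤ) - 1)) • br3 m n p q H F G B) := by
  induction m with
  | zero => simp [tc_zero, br2_zero, br3_zero, br2_zero_left]
  | succ m ih =>
    have br2_last : br2 (m + q) n p (tc m q H B) F G
        = br2 (m + q - 1) n p (tc m q H B) F G
          + pc p (m + q + n - 2) (tc (m + q - 1) n (tc m q H B) F) G := by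
      rcases Nat.eq_zero_or_pos m with rfl | hm
      · simp [tc_zero, tc_zero_left, br2_zero_left, pc_zero_left]
      · rw [show m + q + n - 2 = m + q - 1 + n - 1 by omega, ← br2_succ,
          Nat.sub_add_cancel (by omega)]
    have shift : pc p (m + q + n - 2) (tc m (q + n - 1) H (tc q n B F)) G
        = pc p (m + (q + n - 1) - 1) (tc m (q + n - 1) H (tc q n B F)) G := by
      rcases Nat.eq_zero_or_pos q with rfl | hq
      · simp [tc_zero, tc_zero_right fun i hi => hH i (Nat.lt_succ_of_lt hi), pc_zero_left]
      · rw [show m + q + n - 2 = m + (q + n - 1) - 1 by omega]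
    rw [show m + 1 + q - 1 = m + q by omega, tc_succ m q, br2_add_left, br2_last,
      ih fun i hi => hH i (by omega), tc_tc (fun i hi => hH i (by omega)) B hF,
      br2_add_pc (hH m (by omega)) B hF hG le_rfl]
    simp only [tc_succ, br2_succ, br3_succ, pc_add_left, pc_zsmul_left, smul_add, smul_smul, shift,
      add_right_comm m n q]
    abel

end Brace

section Stokes

variable {m n p : ℕ} {H F G M : (ℕ → L) → L}

lemma br2_tc_two_left (hM : ∀ i < 2, AdditiveInSlot i M) (H : (ℕ → L) → L)
    (hF : DependsOn F (Set.Iio n)) (hG : DependsOn G (Set.Iio p)) :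
    br2 (m + 1) n p (tc 2 m M H) F G
      = tc 2 (m + n + p - 2) M (br2 m n p H F G) + br2 2 (m + n - 1) p M (tc m n H F) G
        + sgn (((m : ℤ) - 1) * ((n : ℤ) - 1)) • br2 2 n (m + p - 1) M F (tc m p H G) := by
  have brace_relation := br2_tc (q := m) hM H hF hG
  simpa only [br3_of_lt_three _ _ _ M _ _ _ (Nat.lt_succ_self 2), add_zero, smul_zero,
    show 2 + m - 1 = m + 1 by omega] using brace_relation

lemma tc_br2_two_left (hM : ∀ i < 2, AdditiveInSlot i M) (hF : DependsOn F (Set.Iio n))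
    (G : (ℕ → L) → L) (hH : DependsOn H (Set.Iio m)) :
    tc (n + p) m (br2 2 n p M F G) H
      = br2 2 n (m + p - 1) M F (tc p m G H)
        + sgn (((p : ℤ) - 1) * ((m : ℤ) - 1)) • br2 2 (m + n - 1) p M (tc n m F H) G := by
  have brace_relation := tc_br2 (p := p) hM hF G hH
  simpa only [br3_of_lt_three _ _ _ M _ _ _ (Nat.lt_succ_self 2), add_zero, smul_zero,
    show 2 + n + p - 2 = n + p by omega, add_comm p m, add_comm n m] using brace_relation

lemma br2_tc_two_right (hH : ∀ i < m, AdditiveInSlot i H) (M : (ℕ → L) → L)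
    (hF : DependsOn F (Set.Iio n)) (hG : DependsOn G (Set.Iio p)) :
    br2 (m + 1) n p (tc m 2 H M) F G
      = tc m (n + p) H (br2 2 n p M F G) + br2 m (n + 1) p H (tc 2 n M F) G
        + br3 m 2 n p H M F G
        + sgn ((n : ℤ) - 1) • (br2 m n (p + 1) H F (tc 2 p M G) + br3 m n 2 p H F M G
          + sgn ((p : ℤ) - 1) • br3 m n p 2 H F G M) := by
  have brace_relation := br2_tc (q := 2) hH M hF hG
  simpa only [show 2 + n + p - 2 = n + p by omega, show 2 + n - 1 = n + 1 by omega,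
    show 2 + p - 1 = p + 1 by omega, show m + 2 - 1 = m + 1 from rfl,
    show ((2 : ℕ) : ℤ) - 1 = 1 from rfl, one_mul] using brace_relation

lemma tc_br2_two_right (hH : ∀ i < m, AdditiveInSlot i H) (hF : DependsOn F (Set.Iio n))
    (G : (ℕ → L) → L) (hM : DependsOn M (Set.Iio 2)) :
    tc (m + n + p - 2) 2 (br2 m n p H F G) M
      = br2 m n (p + 1) H F (tc p 2 G M) + br3 m n p 2 H F G M
        + sgn ((p : ℤ) - 1) • (br2 m (n + 1) p H (tc n 2 F M) G + br3 m n 2 p H F M G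
          + sgn ((n : ℤ) - 1) • br3 m 2 n p H M F G) := by
  have brace_relation := tc_br2 (p := p) hH hF G hM
  simpa only [show p + 2 - 1 = p + 1 from rfl, show n + 2 - 1 = n + 1 from rfl,
    show ((2 : ℕ) : ℤ) - 1 = 1 from rfl, mul_one] using brace_relation

lemma cup_eq_br2 (μ : C K L 2) (m n : ℕ) (F G : (ℕ → L) → L) :
    cup μ m n F G = sgn (m : ℤ) • br2 2 m n (ex μ) F G := by
  rw [br2_two]
  rfl

lemma gb_eq_tc_sub_tc (m n : ℕ) (F G : (ℕ → L) → L) :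
    gb m n F G = tc m n F G - sgn (((m : ℤ) - 1) * ((n : ℤ) - 1)) • tc n m G F := rfl

lemma delta_eq_tc_sub_tc (μ : C K L 2) (m : ℕ) (F : (ℕ → L) → L) :
    delta μ m F = sgn ((m : ℤ) - 1) • tc 2 m (ex μ) F - tc m 2 F (ex μ) := by
  funext x
  simp [delta, gb]

lemma cup_gb_left (μ : C K L 2) (m n p : ℕ) (H F G : (ℕ → L) → L) :
    cup μ (m + n - 1) p (gb m n H F) G
      = sgn ((m : ℤ) + n - 1) • (br2 2 (m + n - 1) p (ex μ) (tc m n H F) G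
        - sgn (((m : ℤ) - 1) * ((n : ℤ) - 1)) •
          br2 2 (m + n - 1) p (ex μ) (tc n m F H) G) := by
  have hμ : ∀ i < 2, AdditiveInSlot i (ex μ) := fun _ => additiveInSlot_ex μ
  rw [cup_eq_br2, gb_eq_tc_sub_tc, br2_sub_middle hμ, br2_zsmul_middle hμ]
  rcases Nat.eq_zero_or_pos (m + n) with h | h
  · obtain ⟨rfl, rfl⟩ : m = 0 ∧ n = 0 := by omega
    simp [tc_zero, br2_two, pc_zero_left, pc_zero_right (hμ 0 two_pos)]
  · rw [show ((m + n - 1 : ℕ) : ℤ) = m + n - 1 by omega]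

lemma cup_gb_right (μ : C K L 2) (m p : ℕ) (hF : DependsOn F (Set.Iio n)) (H G : (ℕ → L) → L) :
    cup μ n (m + p - 1) F (gb m p H G)
      = sgn (n : ℤ) • (br2 2 n (m + p - 1) (ex μ) F (tc m p H G)
        - sgn (((m : ℤ) - 1) * ((p : ℤ) - 1)) •
          br2 2 n (m + p - 1) (ex μ) F (tc p m G H)) := by
  have hμ : ∀ i < 2, AdditiveInSlot i (ex μ) := fun _ => additiveInSlot_ex μ
  rw [cup_eq_br2, gb_eq_tc_sub_tc, br2_sub_right hμ hF, br2_zsmul_right hμ hF]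

lemma gb_cup (μ : C K L 2) (hH : ∀ i < m, AdditiveInSlot i H) (n p : ℕ) (F G : (ℕ → L) → L) :
    gb m (n + p) H (cup μ n p F G)
      = sgn (n : ℤ) • (tc m (n + p) H (br2 2 n p (ex μ) F G)
        - sgn (((m : ℤ) - 1) * ((n : ℤ) + p - 1)) •
          tc (n + p) m (br2 2 n p (ex μ) F G) H) := by
  rw [gb_eq_tc_sub_tc, cup_eq_br2, tc_zsmul_right hH, tc_zsmul_left, smul_comm, ← smul_sub,
    Nat.cast_add]

lemma delta_br2 (μ : C K L 2) (m n p : ℕ) (H F G : (ℕ → L) → L) :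
    delta μ (m + n + p - 2) (br2 m n p H F G)
      = sgn ((m : ℤ) + n + p - 1) • tc 2 (m + n + p - 2) (ex μ) (br2 m n p H F G)
        - tc (m + n + p - 2) 2 (br2 m n p H F G) (ex μ) := by
  rw [delta_eq_tc_sub_tc]
  rcases lt_or_ge m 2 with hm | hm
  · simp [br2_of_lt_two n p H F G hm, tc_zero_right fun _ => additiveInSlot_ex μ]
  · congr 2
    apply sgn_congr
    grind

lemma br2_delta_left (μ : C K L 2) (m n p : ℕ) (H F G : (ℕ → L) → L) :
    br2 (m + 1) n p (delta μ m H) F G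
      = sgn ((m : ℤ) - 1) • br2 (m + 1) n p (tc 2 m (ex μ) H) F G
        - br2 (m + 1) n p (tc m 2 H (ex μ)) F G := by
  rw [delta_eq_tc_sub_tc, br2_sub_left, br2_zsmul_left]

lemma br2_delta_middle (μ : C K L 2) (hH : ∀ i < m, AdditiveInSlot i H) (n p : ℕ)
    (F G : (ℕ → L) → L) :
    br2 m (n + 1) p H (delta μ n F) G
      = sgn ((n : ℤ) - 1) • br2 m (n + 1) p H (tc 2 n (ex μ) F) G
        - br2 m (n + 1) p H (tc n 2 F (ex μ)) G := by
  rw [delta_eq_tc_sub_tc, br2_sub_middle hH, br2_zsmul_middle hH]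

lemma br2_delta_right (μ : C K L 2) (hH : ∀ i < m, AdditiveInSlot i H)
    (hF : DependsOn F (Set.Iio n)) (p : ℕ) (G : (ℕ → L) → L) :
    br2 m n (p + 1) H F (delta μ p G)
      = sgn ((p : ℤ) - 1) • br2 m n (p + 1) H F (tc 2 p (ex μ) G)
        - br2 m n (p + 1) H F (tc p 2 G (ex μ)) := by
  rw [delta_eq_tc_sub_tc, br2_sub_right hH hF, br2_zsmul_right hH hF]

theorem operadic_stokes_law_for_gerstenhaber_brackets_general
    (μ : C K L 2) (hH : ∀ i < m, AdditiveInSlot i H) (hH' : DependsOn H (Set.Iio m))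
    (hF : DependsOn F (Set.Iio n)) (hG : DependsOn G (Set.Iio p)) :
    delta μ (m + n + p - 2) (br2 m n p H F G)
        - br2 m n (p + 1) H F (delta μ p G)
        - sgn ((p : ℤ) - 1) • br2 m (n + 1) p H (delta μ n F) G
        - sgn (((p : ℤ) - 1) + ((n : ℤ) - 1)) •
            br2 (m + 1) n p (delta μ m H) F G
      = sgn ((p : ℤ) - 1) •
          (cup μ (m + n - 1) p (gb m n H F) G
            + sgn (((m : ℤ) - 1) * (n : ℤ)) •
                cup μ n (m + p - 1) F (gb m p H G)
            - gb m (n + p) H (cup μ n p F G)) := by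
  have hμ : ∀ i < 2, AdditiveInSlot i (ex μ) := fun _ => additiveInSlot_ex μ
  rw [delta_br2, br2_delta_right μ hH hF, br2_delta_middle μ hH, br2_delta_left,
    cup_gb_left, cup_gb_right μ m p hF, gb_cup μ hH,
    tc_br2_two_right hH hF G (dependsOn_ex μ), br2_tc_two_right hH (ex μ) hF hG,
    br2_tc_two_left hμ H hF hG, tc_br2_two_left hμ hF G hH']
  by_cases hm : Even m <;> by_cases hn : Even n <;> by_cases hp : Even p <;>
    simp only [sgn_eq_ite, Int.even_add, Int.even_sub, Int.even_mul, Int.even_coe_nat, hm, hn, hp,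
      Int.not_even_one, if_true, if_false, iff_true, iff_false, not_true, or_true, or_false,
      one_smul, neg_smul] <;>
    abel

end Stokes

/-- the operadic Stokes law for Gerstenhaber brackets
`δ̄⟨h|fg⟩ = (-1)^{|g|} ([h,f] ⌣ g + (-1)^{|h| deg f} f ⌣ [h,g] − [h, f ⌣ g])`. -/
theorem operadic_stokes_law_for_gerstenhaber_brackets
    (μ : C K L 2) {m n p : ℕ} (h : C K L m) (f : C K L n) (g : C K L p) :
    delta μ (m + n + p - 2) (br2 m n p (ex h) (ex f) (ex g))
        - br2 m n (p + 1) (ex h) (ex f) (delta μ p (ex g))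
        - sgn ((p : ℤ) - 1) • br2 m (n + 1) p (ex h) (delta μ n (ex f)) (ex g)
        - sgn (((p : ℤ) - 1) + ((n : ℤ) - 1)) •
            br2 (m + 1) n p (delta μ m (ex h)) (ex f) (ex g)
      = sgn ((p : ℤ) - 1) •
          (cup μ (m + n - 1) p (gb m n (ex h) (ex f)) (ex g)
            + sgn (((m : ℤ) - 1) * (n : ℤ)) •
                cup μ n (m + p - 1) (ex f) (gb m p (ex h) (ex g))
            - gb m (n + p) (ex h) (cup μ n p (ex f) (ex g))) :=
  operadic_stokes_law_for_gerstenhaber_brackets_general μ (fun _ => additiveInSlot_ex h)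
    (dependsOn_ex h) (dependsOn_ex f) (dependsOn_ex g)

end OperadPrelude
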